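/- Let n ≥ 2, M ≥ 1, r = 1/(8√M), and 0 < λ ≤ 1. Let A′(r,λ) = A_r ∪ B̄(0,λ) and define f : A′(r,λ) → ℝⁿ by f z = g z for z ∈ A_r and f z = 0 for z ∈ B̄(0,λ) \ A_r. Then f is a (1+λ)-nearisometry. -/

import Mathlib

open Filter Metric Bornology

/-- The auxiliary map `g : ℝⁿ = ℝ^{n-1} × ℝ → ℝⁿ`, `g(x,t) = (x, t + √|x|)` for `|x| ≤ M`
and `g(x,t) = (x, t + √M)` for `|x| ≥ M`.  Here `ℝ^{n-1} × ℝ` carries the euclidean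
(`ℓ²`) norm, via `WithLp 2`. -/
noncomputable def gMap {m : ℕ} (M : ℝ) (z : WithLp 2 (EuclideanSpace ℝ (Fin m) × ℝ)) :
    WithLp 2 (EuclideanSpace ℝ (Fin m) × ℝ) :=
  (WithLp.equiv 2 _).symm
    ((WithLp.equiv 2 _ z).1,
      (WithLp.equiv 2 _ z).2 +
        if ‖(WithLp.equiv 2 _ z).1‖ ≤ M then Real.sqrt ‖(WithLp.equiv 2 _ z).1‖
        else Real.sqrt M)

/-- The set `A_r = {(x,t) : |t| ≤ r |x|}` in `ℝ^{n-1} × ℝ`. -/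
def coneSet {m : ℕ} (r : ℝ) : Set (WithLp 2 (EuclideanSpace ℝ (Fin m) × ℝ)) :=
  {z | |(WithLp.equiv 2 _ z).2| ≤ r * ‖(WithLp.equiv 2 _ z).1‖}

/-!
Two vectors of `E × F` with the same first component have squared norms differing by the difference
of the squared second components, while the sum of their norms is at least twice the norm of the
first component; dividing bounds the difference of the norms. The shear
`(x, t) ↦ (x, t + √(min |x| M))` changes a difference vector `(x - y, t - s)` by a height `δ`
with `δ² ≤ |x - y|`, since the square root is `1/2`-Hölder, and on the cone
`|t - s| ≤ r (|x| + |y|)`, so that concavity of the truncated square root makes `2 |t - s| |δ|` at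
most `2 r √M |x - y|`. Collapsing the ball of radius `λ` to the fixed point `0` adds at most `λ`.
-/

/-- `f` is an `ε`-nearisometry on `A`: it changes the distances between points of `A` by at
most `ε`. -/
def IsNearisometryOn {X Y : Type*} [PseudoMetricSpace X] [PseudoMetricSpace Y] (ε : ℝ) (f : X → Y)
    (A : Set X) : Prop :=
  ∀ x ∈ A, ∀ y ∈ A, |dist (f x) (f y) - dist x y| ≤ ε

namespace IsNearisometryOn

variable {X Y : Type*} [PseudoMetricSpace X] [PseudoMetricSpace Y] {ε δ : ℝ} {f g : X → Y}
  {A : Set X} {p : X}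

theorem congr (hg : IsNearisometryOn ε g A) (hfg : Set.EqOn f g A) : IsNearisometryOn ε f A := by
  intro x hx y hy
  rw [hfg hx, hfg hy]
  exact hg x hx y hy

theorem union_closedBall (hf : IsNearisometryOn ε f A) (hp : p ∈ A) (hδ : 0 ≤ δ) (hδε : δ ≤ ε)
    (hfp : ∀ z ∈ closedBall p δ \ A, f z = f p) :
    IsNearisometryOn (ε + δ) f (A ∪ closedBall p δ) := by
  have mixed : ∀ z ∈ A, ∀ w ∈ closedBall p δ \ A, |dist (f z) (f w) - dist z w| ≤ ε + δ := by
    intro z hz w hw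
    rw [hfp w hw]
    calc |dist (f z) (f p) - dist z w|
        ≤ |dist (f z) (f p) - dist z p| + |dist z p - dist z w| := abs_sub_le _ _ _
      _ ≤ ε + δ := by
        refine add_le_add (hf z hz p hp) ?_
        rw [dist_comm z p, dist_comm z w]
        exact (abs_dist_sub_le p w z).trans (mem_closedBall'.1 hw.1)
  intro z hz w hw
  by_cases hzA : z ∈ A <;> by_cases hwA : w ∈ A
  · exact (hf z hzA w hwA).trans (le_add_of_nonneg_right hδ)
  · exact mixed z hzA w ⟨hw.resolve_left hwA, hwA⟩
  · rw [dist_comm (f z), dist_comm z]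
    exact mixed w hwA z ⟨hz.resolve_left hzA, hzA⟩
  · have hzp := hz.resolve_left hzA
    have hwp := hw.resolve_left hwA
    rw [hfp z ⟨hzp, hzA⟩, hfp w ⟨hwp, hwA⟩, dist_self, zero_sub, abs_neg, abs_of_nonneg dist_nonneg]
    calc dist z w ≤ dist z p + dist w p := dist_triangle_right z w p
      _ ≤ ε + δ := add_le_add ((mem_closedBall.1 hzp).trans hδε) (mem_closedBall.1 hwp)

end IsNearisometryOn

theorem abs_norm_sub_norm_le_of_fst_eq {E F : Type*} [SeminormedAddCommGroup E]
    [SeminormedAddCommGroup F] {u v : WithLp 2 (E × F)} {c : ℝ} (hc : 0 ≤ c)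
    (hfst : u.fst = v.fst) (hsnd : |‖u.snd‖ ^ 2 - ‖v.snd‖ ^ 2| ≤ 2 * c * ‖u.fst‖) :
    |‖u‖ - ‖v‖| ≤ c := by
  have hu : ‖u.fst‖ ≤ ‖u‖ := WithLp.norm_fst_le _ u
  have hv : ‖u.fst‖ ≤ ‖v‖ := hfst ▸ WithLp.norm_fst_le _ v
  rcases (add_nonneg (norm_nonneg u) (norm_nonneg v)).eq_or_lt with hsum | hsum
  · have hnorm : ‖u‖ - ‖v‖ = 0 := by linarith [norm_nonneg u, norm_nonneg v]
    rwa [hnorm, abs_zero]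
  · refine le_of_mul_le_mul_right ?_ hsum
    calc |‖u‖ - ‖v‖| * (‖u‖ + ‖v‖) = |‖u‖ ^ 2 - ‖v‖ ^ 2| := by
          rw [sq_sub_sq, abs_mul, abs_of_pos hsum, mul_comm]
      _ = |‖u.snd‖ ^ 2 - ‖v.snd‖ ^ 2| := by
          rw [WithLp.prod_norm_sq_eq_of_L2, WithLp.prod_norm_sq_eq_of_L2, hfst,
            add_sub_add_left_eq_sub]
      _ ≤ c * (‖u.fst‖ + ‖u.fst‖) := by linarith
      _ ≤ c * (‖u‖ + ‖v‖) := by gcongr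

section TruncatedSqrt

variable {a b M : ℝ}

theorem sq_sqrt_sub_sqrt_le_abs_sub (ha : 0 ≤ a) (hb : 0 ≤ b) : (√a - √b) ^ 2 ≤ |a - b| := by
  have hdiff : |√a - √b| ≤ √a + √b := by
    simpa only [abs_of_nonneg (Real.sqrt_nonneg _)] using abs_sub (√a) (√b)
  calc (√a - √b) ^ 2 = |√a - √b| * |√a - √b| := by rw [abs_mul_abs_self, sq]
    _ ≤ (√a + √b) * |√a - √b| := by gcongr
    _ = |√a ^ 2 - √b ^ 2| := by
      rw [sq_sub_sq, abs_mul, abs_of_nonneg (add_nonneg (Real.sqrt_nonneg a) (Real.sqrt_nonneg b))]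
    _ = |a - b| := by rw [Real.sq_sqrt ha, Real.sq_sqrt hb]

theorem sq_sqrt_min_sub_sqrt_min_le (ha : 0 ≤ a) (hb : 0 ≤ b) (hM : 0 ≤ M) :
    (√(min a M) - √(min b M)) ^ 2 ≤ |a - b| :=
  calc (√(min a M) - √(min b M)) ^ 2 ≤ |min a M - min b M| :=
        sq_sqrt_sub_sqrt_le_abs_sub (le_min ha hM) (le_min hb hM)
    _ ≤ |a - b| := by simpa using abs_min_sub_min_le_max a M b M

theorem mul_min_le_mul_min (hb : 0 ≤ b) (hM : 0 ≤ M) (hba : b ≤ a) :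
    b * min a M ≤ a * min b M := by
  rw [mul_min_of_nonneg _ _ hb, mul_min_of_nonneg _ _ (hb.trans hba)]
  exact min_le_min (mul_comm b a).le (mul_le_mul_of_nonneg_right hba hM)

theorem two_mul_mul_sqrt_min_le (hb : 0 ≤ b) (hM : 0 ≤ M) (hba : b ≤ a) :
    2 * b * √(min a M) ≤ (a + b) * √(min b M) := by
  have ha : 0 ≤ a := hb.trans hba
  refine (sq_le_sq₀ (by positivity) (by positivity)).1 ?_
  calc (2 * b * √(min a M)) ^ 2 = 4 * b * (b * min a M) := by
        rw [mul_pow, Real.sq_sqrt (le_min ha hM)]; ring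
    _ ≤ 4 * b * (a * min b M) :=
        mul_le_mul_of_nonneg_left (mul_min_le_mul_min hb hM hba) (by positivity)
    _ = 4 * a * b * min b M := by ring
    _ ≤ (a + b) ^ 2 * min b M :=
        mul_le_mul_of_nonneg_right (four_mul_le_sq_add a b) (le_min hb hM)
    _ = ((a + b) * √(min b M)) ^ 2 := by rw [mul_pow, Real.sq_sqrt (le_min hb hM)]

theorem add_mul_abs_sqrt_min_sub_sqrt_min_le (ha : 0 ≤ a) (hb : 0 ≤ b) (hM : 0 ≤ M) :
    (a + b) * |√(min a M) - √(min b M)| ≤ √M * |a - b| := by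
  wlog hba : b ≤ a generalizing a b
  · rw [add_comm, abs_sub_comm, abs_sub_comm a]
    exact this hb ha (le_of_not_ge hba)
  rw [abs_of_nonneg (sub_nonneg.2 (Real.sqrt_le_sqrt (min_le_min_right M hba))),
    abs_of_nonneg (sub_nonneg.2 hba)]
  calc (a + b) * (√(min a M) - √(min b M)) ≤ √(min a M) * (a - b) := by
        linarith [two_mul_mul_sqrt_min_le hb hM hba]
    _ ≤ √M * (a - b) :=
        mul_le_mul_of_nonneg_right (Real.sqrt_le_sqrt (min_le_right a M)) (sub_nonneg.2 hba)

end TruncatedSqrt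

section SqrtShear

variable {E : Type*} [SeminormedAddCommGroup E] {M r : ℝ}

/-- The vertical shear `(x, t) ↦ (x, t + √(min ‖x‖ M))` of `E × ℝ`, which is the map `g` over an
arbitrary seminormed group `E`. -/
noncomputable def sqrtShear (M : ℝ) (z : WithLp 2 (E × ℝ)) : WithLp 2 (E × ℝ) :=
  WithLp.toLp 2 (z.fst, z.snd + √(min ‖z.fst‖ M))

/-- The cone `A_r` of the points `(x, t)` of slope at most `r`, over an arbitrary seminormed
group `E`. -/
def slopeCone (r : ℝ) : Set (WithLp 2 (E × ℝ)) :=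
  {z | |z.snd| ≤ r * ‖z.fst‖}

theorem sqrtShear_zero (hM : 0 ≤ M) : sqrtShear M (0 : WithLp 2 (E × ℝ)) = 0 := by
  simp [sqrtShear, hM]

theorem zero_mem_slopeCone : (0 : WithLp 2 (E × ℝ)) ∈ slopeCone r := by
  simp [slopeCone]

theorem abs_snd_sub_le_of_mem_slopeCone {z w : WithLp 2 (E × ℝ)} (hz : z ∈ slopeCone r)
    (hw : w ∈ slopeCone r) : |z.snd - w.snd| ≤ r * (‖z.fst‖ + ‖w.fst‖) :=
  calc |z.snd - w.snd| ≤ |z.snd| + |w.snd| := abs_sub _ _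
    _ ≤ r * ‖z.fst‖ + r * ‖w.fst‖ := add_le_add hz hw
    _ = r * (‖z.fst‖ + ‖w.fst‖) := (mul_add _ _ _).symm

theorem isNearisometryOn_sqrtShear (hM : 0 ≤ M) (hr : 0 ≤ r) (hrM : 2 * r * √M ≤ 1) :
    IsNearisometryOn 1 (sqrtShear M) (slopeCone r : Set (WithLp 2 (E × ℝ))) := by
  intro z hz w hw
  set δ := √(min ‖z.fst‖ M) - √(min ‖w.fst‖ M)
  set τ := z.snd - w.snd
  have hfst : |‖z.fst‖ - ‖w.fst‖| ≤ ‖z.fst - w.fst‖ := abs_norm_sub_norm_le _ _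
  have hδ : δ ^ 2 ≤ ‖z.fst - w.fst‖ :=
    (sq_sqrt_min_sub_sqrt_min_le (norm_nonneg _) (norm_nonneg _) hM).trans hfst
  have hτδ : 2 * (|τ| * |δ|) ≤ ‖z.fst - w.fst‖ :=
    calc 2 * (|τ| * |δ|) ≤ 2 * (r * (‖z.fst‖ + ‖w.fst‖) * |δ|) := by
          gcongr
          exact abs_snd_sub_le_of_mem_slopeCone hz hw
      _ = 2 * r * ((‖z.fst‖ + ‖w.fst‖) * |δ|) := by ring
      _ ≤ 2 * r * (√M * |‖z.fst‖ - ‖w.fst‖|) := by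
          refine mul_le_mul_of_nonneg_left ?_ (by positivity)
          exact add_mul_abs_sqrt_min_sub_sqrt_min_le (norm_nonneg _) (norm_nonneg _) hM
      _ = 2 * r * √M * |‖z.fst‖ - ‖w.fst‖| := by ring
      _ ≤ ‖z.fst - w.fst‖ := (mul_le_of_le_one_left (abs_nonneg _) hrM).trans hfst
  have hsnd_shear : (sqrtShear M z - sqrtShear M w).snd = τ + δ := add_sub_add_comm _ _ _ _
  have hsnd_diff : (z - w).snd = τ := rfl
  rw [dist_eq_norm, dist_eq_norm]
  refine abs_norm_sub_norm_le_of_fst_eq zero_le_one rfl ?_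
  calc |‖(sqrtShear M z - sqrtShear M w).snd‖ ^ 2 - ‖(z - w).snd‖ ^ 2|
      = |δ ^ 2 + 2 * (τ * δ)| := by
        rw [hsnd_shear, hsnd_diff, Real.norm_eq_abs, Real.norm_eq_abs, sq_abs, sq_abs]
        ring_nf
    _ ≤ δ ^ 2 + 2 * (|τ| * |δ|) :=
        (abs_add_le _ _).trans_eq (by rw [abs_sq, abs_mul, abs_mul, abs_two])
    _ ≤ 2 * 1 * ‖z.fst - w.fst‖ := by linarith

end SqrtShear

theorem gMap_eq_sqrtShear {m : ℕ} (M : ℝ) (z : WithLp 2 (EuclideanSpace ℝ (Fin m) × ℝ)) :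
    gMap M z = sqrtShear M z := by
  have hmin : √(min ‖z.fst‖ M) = if ‖z.fst‖ ≤ M then √‖z.fst‖ else √M := by
    rw [min_def, apply_ite Real.sqrt]
  rw [sqrtShear, hmin]
  rfl

theorem extended_map_nearisometry_general {E : Type*} [SeminormedAddCommGroup E] {M r lam : ℝ}
    (hM : 0 ≤ M) (hr : 0 ≤ r) (hrM : 2 * r * √M ≤ 1) (hlam0 : 0 ≤ lam) (hlam1 : lam ≤ 1)
    {f : WithLp 2 (E × ℝ) → WithLp 2 (E × ℝ)} (hf1 : ∀ z ∈ slopeCone r, f z = sqrtShear M z)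
    (hf2 : ∀ z ∈ closedBall 0 lam \ slopeCone r, f z = 0) :
    IsNearisometryOn (1 + lam) f (slopeCone r ∪ closedBall 0 lam) := by
  have hf0 : f 0 = 0 := (hf1 0 zero_mem_slopeCone).trans (sqrtShear_zero hM)
  have hcone : IsNearisometryOn 1 f (slopeCone r) :=
    (isNearisometryOn_sqrtShear hM hr hrM).congr hf1
  exact hcone.union_closedBall zero_mem_slopeCone hlam0 hlam1 fun z hz => (hf2 z hz).trans hf0.symm

/-- Lemma 3.7: with `M ≥ 1`, `r = 1/(8√M)` and `0 < λ ≤ 1`, the map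
`f : A_r ∪ B̄(0, λ) → ℝⁿ` given by `f z = g z` on `A_r` and `f z = 0` on `B̄(0, λ) \ A_r`
is a `(1 + λ)`-nearisometry. -/
theorem extended_map_nearisometry {n : ℕ} (hn : 2 ≤ n) (M : ℝ) (hM : 1 ≤ M)
    (r : ℝ) (hr : r = 1 / (8 * Real.sqrt M)) (lam : ℝ) (hlam0 : 0 < lam) (hlam1 : lam ≤ 1)
    (f : WithLp 2 (EuclideanSpace ℝ (Fin (n - 1)) × ℝ) →
      WithLp 2 (EuclideanSpace ℝ (Fin (n - 1)) × ℝ))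
    (hf1 : ∀ z ∈ coneSet (m := n - 1) r, f z = gMap M z)
    (hf2 : ∀ z ∈ closedBall (0 : WithLp 2 (EuclideanSpace ℝ (Fin (n - 1)) × ℝ)) lam \
      coneSet (m := n - 1) r, f z = 0) :
    ∀ z ∈ coneSet (m := n - 1) r ∪ closedBall 0 lam,
      ∀ z' ∈ coneSet (m := n - 1) r ∪ closedBall 0 lam,
        |‖f z' - f z‖ - ‖z' - z‖| ≤ 1 + lam := by
  have hM0 : 0 < √M := Real.sqrt_pos.2 (zero_lt_one.trans_le hM)
  have hrM : 2 * r * √M ≤ 1 := by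
    rw [hr, mul_one_div, div_mul_eq_mul_div, div_le_one (mul_pos (by norm_num) hM0)]
    linarith
  intro z hz z' hz'
  rw [← dist_eq_norm, ← dist_eq_norm]
  exact extended_map_nearisometry_general (zero_le_one.trans hM) (hr ▸ by positivity) hrM hlam0.le
    hlam1 (fun z hz => (hf1 z hz).trans (gMap_eq_sqrtShear M z)) hf2 z' hz' z hz
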